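/- Let P be the heap of a word s₁s₂⋯s_q in the free monoid on the generating set S of a Coxeter group W. Then P is the heap of a fully commutative element of W if and only if (1) there is no covering relation i ≺ j in P with sᵢ = sⱼ, and (2) there is no convex chain i₁ < i₂ < ⋯ < i_m in P with alternating labels s,t,s,t,... where m = m(s,t) ≥ 3. -/

import Mathlib

open CoxeterSystem

def CommStep {B : Type*} (M : CoxeterMatrix B) (l l' : List B) : Prop :=
  ∃ (u v : List B) (a b : B), M a b = 2 ∧ l = u ++ a :: b :: v ∧ l' = u ++ b :: a :: v

def CommEquiv {B : Type*} (M : CoxeterMatrix B) : List B → List B → Prop :=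
  Relation.ReflTransGen fun l l' => CommStep M l l' ∨ CommStep M l' l

def FullyCommutative {B W : Type*} [Group W] {M : CoxeterMatrix B}
    (cs : CoxeterSystem M W) (w : W) : Prop :=
  ∀ l l', cs.IsReduced l → cs.wordProd l = w → cs.IsReduced l' → cs.wordProd l' = w →
    CommEquiv M l l'

def heapLe {B : Type*} (M : CoxeterMatrix B) (ω : List B) :
    Fin ω.length → Fin ω.length → Prop :=
  Relation.ReflTransGen fun i j => (i : ℕ) < (j : ℕ) ∧ M (ω.get i) (ω.get j) ≠ 2

def heapLt {B : Type*} (M : CoxeterMatrix B) (ω : List B) (i j : Fin ω.length) : Prop :=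
  heapLe M ω i j ∧ i ≠ j

/-- `j` covers `i` in the heap of `ω`. -/
def HeapCovers {B : Type*} (M : CoxeterMatrix B) (ω : List B) (i j : Fin ω.length) : Prop :=
  heapLt M ω i j ∧ ∀ k, heapLt M ω i k → heapLt M ω k j → False

theorem Function.End.mul_apply {α : Type*} (f g : Function.End α) (x : α) :
    (f * g) x = f (g x) := rfl

theorem Function.End.one_apply {α : Type*} (x : α) : (1 : Function.End α) x = x := rfl

namespace CoxeterMatrix

variable {B : Type*} (M : CoxeterMatrix B)

/-- The linear functional `v ↦ 2 ⟨α i, v⟩` of the geometric representation, where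
`⟨α i, α j⟩ = -cos (π / M i j)`. When `M i j = 0`, this uses `π / 0 = 0`. -/
noncomputable def simpleCoroot (i : B) : Module.Dual ℝ (B →₀ ℝ) :=
  Finsupp.linearCombination ℝ fun j => -2 * Real.cos (Real.pi / M i j)

theorem simpleCoroot_single (i j : B) :
    M.simpleCoroot i (Finsupp.single j 1) = -2 * Real.cos (Real.pi / M i j) := by
  simp [simpleCoroot]

theorem simpleCoroot_self (i : B) : M.simpleCoroot i (Finsupp.single i 1) = 2 := by
  simp [simpleCoroot_single]

/-- The simple reflection of the geometric representation. -/
noncomputable def simpleReflection (i : B) : (B →₀ ℝ) ≃ₗ[ℝ] (B →₀ ℝ) :=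
  Module.reflection (M.simpleCoroot_self i)

theorem simpleCoroot_mul_simpleCoroot (i j : B) :
    M.simpleCoroot i (Finsupp.single j 1) * M.simpleCoroot j (Finsupp.single i 1) - 2 =
      2 * Real.cos (2 * Real.pi / M i j) := by
  rw [simpleCoroot_single, simpleCoroot_single, M.symmetric j i,
    show 2 * Real.pi / M i j = 2 * (Real.pi / M i j) by ring, Real.cos_two_mul]
  ring

theorem sin_two_pi_div_pos {m : ℕ} (hm : 3 ≤ m) :
    0 < Real.sin (2 * Real.pi / m) := by
  have hm' : (3 : ℝ) ≤ m := by exact_mod_cast hm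
  apply Real.sin_pos_of_pos_of_lt_pi
  · positivity
  · rw [div_lt_iff₀ (by positivity)]
    nlinarith [Real.pi_pos]

theorem isLiftable_simpleReflection : M.IsLiftable M.simpleReflection := by
  intro i j
  rcases Nat.lt_or_ge (M i j) 3 with h | h
  · interval_cases hm : M i j
    · simp
    · obtain rfl : i = j := by
        by_contra hij
        exact M.off_diagonal i j hij hm
      ext v : 1
      simp [simpleReflection, LinearEquiv.mul_apply, Module.involutive_reflection _ _]
    · ext v : 1
      have h1 : M.simpleCoroot i (Finsupp.single j 1) = 0 := by simp [simpleCoroot_single, hm]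
      have h2 : M.simpleCoroot j (Finsupp.single i 1) = 0 := by
        simp [simpleCoroot_single, M.symmetric j i, hm]
      simp only [simpleReflection, pow_two, LinearEquiv.mul_apply, Module.reflection_apply, map_sub,
        map_smul, h1, h2, simpleCoroot_self, LinearEquiv.coe_one, id]
      module
  · have hs := sin_two_pi_div_pos h
    have hm : (M i j : ℝ) ≠ 0 := by positivity
    ext v : 1
    rw [simpleReflection, simpleReflection, Module.reflection_mul_reflection_pow_apply _ _ _ _ _
      (M.simpleCoroot_mul_simpleCoroot i j).symm]
    have key (n : ℤ) := Polynomial.Chebyshev.S_two_mul_real_cos (2 * Real.pi / M i j) n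
    obtain ⟨k, hk⟩ | ⟨k, hk⟩ := Nat.even_or_odd (M i j)
    · have hk0 : (k : ℝ) ≠ 0 := by
        rintro hk0
        simp [hk, hk0] at hm
      have h0 : (Polynomial.Chebyshev.S ℝ (k - 1)).eval (2 * Real.cos (2 * Real.pi / M i j)) = 0 := by
        have := key (k - 1)
        rw [show ((k - 1 : ℤ) + 1 : ℝ) * (2 * Real.pi / M i j) = Real.pi by
          rw [hk]; push_cast; field_simp; ring, Real.sin_pi] at this
        exact (mul_eq_zero.mp this).resolve_right hs.ne'
      rw [show ((M i j : ℤ) - 2) / 2 = k - 1 by lia, show ((M i j : ℤ) - 1) / 2 = k - 1 by lia, h0]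
      simp
    · have h0 : (Polynomial.Chebyshev.S ℝ k).eval (2 * Real.cos (2 * Real.pi / M i j)) +
          (Polynomial.Chebyshev.S ℝ (k - 1)).eval (2 * Real.cos (2 * Real.pi / M i j)) = 0 := by
        have h1 := key k
        have h2 := key (k - 1)
        rw [show ((k - 1 : ℤ) + 1 : ℝ) * (2 * Real.pi / M i j) = 2 * Real.pi -
          ((k : ℤ) + 1 : ℝ) * (2 * Real.pi / M i j) by
          rw [hk] at hm ⊢; push_cast at hm ⊢; field_simp; ring, Real.sin_two_pi_sub] at h2
        refine (mul_eq_zero.mp (?_ : _ * Real.sin (2 * Real.pi / M i j) = 0)).resolve_right hs.ne'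
        linear_combination h1 + h2
      rw [show ((M i j : ℤ) - 2) / 2 = k - 1 by lia, show ((M i j : ℤ) - 1) / 2 = k by lia,
        show ((M i j : ℤ) - 3) / 2 = k - 1 by lia, show (M i j : ℤ) / 2 = k by lia, h0]
      simp

end CoxeterMatrix

namespace CoxeterSystem

variable {B W : Type*} [Group W] {M : CoxeterMatrix B} (cs : CoxeterSystem M W)

theorem simple_mul_simple_pow_ne_one {i j : B} (hij : i ≠ j) {r : ℕ} (hr : 0 < r)
    (hM : M i j = 0 ∨ r < M i j) : (cs.simple i * cs.simple j) ^ r ≠ 1 := by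
  intro h
  have h := congrArg (cs.lift ⟨_, M.isLiftable_simpleReflection⟩) h
  rw [map_pow, map_mul, lift_apply_simple, lift_apply_simple, map_one] at h
  have h := congrArg (fun g : (B →₀ ℝ) ≃ₗ[ℝ] (B →₀ ℝ) => g (Finsupp.single i 1)) h
  simp only [CoxeterMatrix.simpleReflection, LinearEquiv.coe_one, id] at h
  rw [Module.reflection_mul_reflection_pow_apply_self _ _ _ _
      (M.simpleCoroot_mul_simpleCoroot i j).symm] at h
  have hi := DFunLike.congr_fun h i
  have hj := DFunLike.congr_fun h j
  simp [hij, hij.symm, CoxeterMatrix.simpleCoroot_single] at hi hj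
  have h1 : M i j ≠ 1 := M.off_diagonal i j hij
  rw [M.symmetric j i] at hj
  rcases hM with hM | hM
  · simp [hM] at hj
    lia
  · by_cases h2 : M i j = 2
    · obtain rfl : r = 1 := by lia
      norm_num [h2] at hi
    have hs := CoxeterMatrix.sin_two_pi_div_pos (m := M i j) (by lia)
    have hm : (3 : ℝ) ≤ M i j := by exact_mod_cast (show 3 ≤ M i j by lia)
    have hc : Real.cos (Real.pi / M i j) ≠ 0 := by
      refine (Real.cos_pos_of_mem_Ioo ⟨?_, ?_⟩).ne'
      · have : 0 < Real.pi / M i j := by positivity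
        linarith [Real.pi_pos]
      · rw [div_lt_iff₀ (by positivity)]
        nlinarith [Real.pi_pos]
    have hj := hj.resolve_right hc
    rw [hj, add_zero] at hi
    have k1 := Polynomial.Chebyshev.S_two_mul_real_cos (2 * Real.pi / M i j) r
    rw [hi, one_mul] at k1
    have k2 := Polynomial.Chebyshev.S_two_mul_real_cos (2 * Real.pi / M i j) (r - 1)
    rw [hj, zero_mul] at k2
    push_cast at k1 k2
    rw [sub_add_cancel] at k2
    rw [add_mul, one_mul, Real.sin_add, ← k2, zero_mul, zero_add] at k1
    have k3 := mul_right_cancel₀ hs.ne' (k1.symm.trans (one_mul _).symm)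
    obtain ⟨n, hn⟩ := (Real.cos_eq_one_iff _).mp k3
    have : (n * M i j : ℝ) = r := by
      field_simp at hn
      linear_combination hn
    have : n * (M i j : ℤ) = r := by exact_mod_cast this
    have hn : 0 < n := by
      by_contra hn
      have : n * (M i j : ℤ) ≤ 0 := mul_nonpos_of_nonpos_of_nonneg (by lia) (by lia)
      lia
    nlinarith

/-- The action of a simple reflection `s i` on `W × ZMod 2`: conjugation on the first component,
flipping the second one exactly over the point `s i`. -/
noncomputable def signedConj (i : B) : Function.End (W × ZMod 2) :=
  open scoped Classical in
  fun x => (cs.simple i * x.1 * cs.simple i, x.2 + if x.1 = cs.simple i then 1 else 0)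

open scoped Classical in
theorem signedConj_mul_pow_apply (i j : B) (n : ℕ) (x : W) (e : ZMod 2) :
    ((cs.signedConj i * cs.signedConj j) ^ n) (x, e) =
      ((cs.simple i * cs.simple j) ^ n * x * (cs.simple j * cs.simple i) ^ n,
        e + ∑ k ∈ Finset.range (2 * n),
          if x = (cs.simple j * cs.simple i) ^ k * cs.simple j then 1 else 0) := by
  induction n generalizing x e with
  | zero => simp [Function.End.one_apply]
  | succ n ih =>
    have conj_iff (y : W) : cs.simple i * (cs.simple j * x * cs.simple j) * cs.simple i = y ↔
        x = (cs.simple j * cs.simple i) * y * (cs.simple i * cs.simple j) := by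
      constructor
      · rintro rfl
        simp [mul_assoc]
      · rintro rfl
        simp [mul_assoc]
    rw [pow_succ, Function.End.mul_apply, Function.End.mul_apply, signedConj, signedConj, ih]
    refine Prod.ext ?_ ?_
    · simp only [pow_succ (cs.simple i * cs.simple j), pow_succ' (cs.simple j * cs.simple i),
        mul_assoc]
    · simp only [show 2 * (n + 1) = 2 * n + 1 + 1 by ring, Finset.sum_range_succ', conj_iff]
      have h1 : cs.simple j * x * cs.simple j = cs.simple i ↔
          x = (cs.simple j * cs.simple i) ^ (0 + 1) * cs.simple j := by
        constructor
        · intro h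
          simp [← h, mul_assoc]
        · rintro rfl
          simp [mul_assoc]
      have h2 (k : ℕ) : (cs.simple j * cs.simple i) * ((cs.simple j * cs.simple i) ^ k *
          cs.simple j) * (cs.simple i * cs.simple j) =
          (cs.simple j * cs.simple i) ^ (k + 1 + 1) * cs.simple j := by
        rw [pow_succ, pow_succ']
        simp only [mul_assoc]
      simp only [h1, h2]
      simp
      ring

theorem isLiftable_signedConj : M.IsLiftable cs.signedConj := by
  classical
  intro i j
  funext ⟨x, e⟩
  rw [signedConj_mul_pow_apply, simple_mul_simple_pow, simple_mul_simple_pow', two_mul,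
    Finset.sum_range_add]
  simp [pow_add, Function.End.one_apply, CharTwo.add_self_eq_zero]

open scoped Classical in
theorem lift_signedConj_wordProd (ω : List B) (x : W) (e : ZMod 2) :
    cs.lift ⟨_, cs.isLiftable_signedConj⟩ (cs.wordProd ω) (x, e) =
      (cs.wordProd ω * x * (cs.wordProd ω)⁻¹, e + (cs.rightInvSeq ω).count x) := by
  induction ω with
  | nil => simp [Function.End.one_apply]
  | cons i ω ih =>
    rw [wordProd_cons, map_mul, Function.End.mul_apply, ih, lift_apply_simple,
      signedConj, rightInvSeq, List.count_cons]
    refine Prod.ext ?_ ?_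
    · simp [mul_assoc]
    · have : cs.wordProd ω * x * (cs.wordProd ω)⁻¹ = cs.simple i ↔
          (cs.wordProd ω)⁻¹ * cs.simple i * cs.wordProd ω = x := by
        constructor
        · intro h
          simp [← h, mul_assoc]
        · rintro rfl
          simp [mul_assoc]
      simp [this, add_assoc]

open scoped Classical in
theorem count_leftInvSeq_congr {ω ω' : List B} (h : cs.wordProd ω = cs.wordProd ω') (x : W) :
    ((cs.leftInvSeq ω).count x : ZMod 2) = (cs.leftInvSeq ω').count x := by
  have h1 := cs.lift_signedConj_wordProd ω.reverse x 0
  have h2 := cs.lift_signedConj_wordProd ω'.reverse x 0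
  rw [wordProd_reverse, h, ← wordProd_reverse, h2] at h1
  simpa [rightInvSeq_reverse] using (congrArg Prod.snd h1).symm

theorem isReduced_cons_of_isLeftDescent {w : W} {i : B} (hi : cs.IsLeftDescent w i) :
    ∃ ω, cs.IsReduced (i :: ω) ∧ cs.wordProd (i :: ω) = w := by
  obtain ⟨ω, hω, h⟩ := cs.exists_isReduced (cs.simple i * w)
  have hw : cs.wordProd (i :: ω) = w := by simp [wordProd_cons, ← h]
  refine ⟨ω, ?_, hw⟩
  rw [IsReduced, hw, List.length_cons, ← hω.eq, ← h]
  exact (cs.isLeftDescent_iff.mp hi).symm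

/-- The exchange property. -/
theorem exists_getD_leftInvSeq_eq_of_isLeftDescent {ω : List B} {i : B}
    (hi : cs.IsLeftDescent (cs.wordProd ω) i) :
    ∃ j < ω.length, (cs.leftInvSeq ω).getD j 1 = cs.simple i := by
  classical
  obtain ⟨ω', hr, h⟩ := cs.isReduced_cons_of_isLeftDescent hi
  have h1 : (cs.leftInvSeq (i :: ω')).count (cs.simple i) = 1 :=
    List.count_eq_one_of_mem hr.nodup_leftInvSeq (by simp [leftInvSeq])
  have h2 := cs.count_leftInvSeq_congr h (cs.simple i)
  have h3 : cs.simple i ∈ cs.leftInvSeq ω := by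
    by_contra h3
    rw [h1, List.count_eq_zero_of_not_mem h3] at h2
    simp at h2
  obtain ⟨j, hj, h4⟩ := List.getElem_of_mem h3
  refine ⟨j, by simpa using hj, ?_⟩
  rw [List.getD_eq_getElem _ _ hj, h4]

/-- The word of length `m` alternating between `i` and `j` that starts with `i`. -/
def alternatingFrom (i j : B) : ℕ → List B
  | 0 => []
  | m + 1 => i :: alternatingFrom j i m

@[simp]
theorem length_alternatingFrom (i j : B) (m : ℕ) : (alternatingFrom i j m).length = m := by
  induction m generalizing i j with
  | zero => rfl
  | succ m ih => simp [alternatingFrom, ih]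

theorem reverse_alternatingWord (i j : B) (m : ℕ) :
    (alternatingWord j i m).reverse = alternatingFrom i j m := by
  induction m generalizing i j with
  | zero => rfl
  | succ m ih => simp [alternatingFrom, alternatingWord, ih]

theorem wordProd_alternatingFrom (i j : B) :
    cs.wordProd (alternatingFrom i j (M i j)) = cs.wordProd (alternatingFrom j i (M i j)) := by
  rw [← reverse_alternatingWord, ← reverse_alternatingWord, wordProd_reverse, wordProd_reverse]
  have h := cs.wordProd_braidWord_eq j i
  rw [braidWord, braidWord, M.symmetric j i] at h
  rw [h]

theorem getD_leftInvSeq_alternatingFrom_append (i j : B) {m k : ℕ} (hk : k < m) (ω : List B) :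
    (cs.leftInvSeq (alternatingFrom i j m ++ ω)).getD k 1 =
      (cs.simple i * cs.simple j) ^ k * cs.simple i := by
  induction m generalizing i j k with
  | zero => simp at hk
  | succ m ih =>
    cases k with
    | zero => simp [alternatingFrom, leftInvSeq]
    | succ k =>
      have h := ih j i (show k < m by lia)
      rw [alternatingFrom, List.cons_append, leftInvSeq, List.getD_cons_succ,
        ← map_one (MulAut.conj (cs.simple i)), List.getD_map, h]
      rw [MulAut.conj_apply, inv_simple, pow_succ]
      have h2 : SemiconjBy (cs.simple i) (cs.simple j * cs.simple i) (cs.simple i * cs.simple j) := by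
        simp [SemiconjBy, mul_assoc]
      rw [← mul_assoc, (h2.pow_right k).eq]
      simp [mul_assoc]

theorem exists_alternatingFrom_append {w : W} {i j : B} (hij : i ≠ j)
    (hi : cs.IsLeftDescent w i) (hj : cs.IsLeftDescent w j) (k : ℕ)
    (hk : M i j = 0 ∨ k ≤ M i j) :
    ∃ ω, cs.wordProd (alternatingFrom i j k ++ ω) = w ∧ k + ω.length = cs.length w := by
  induction k generalizing i j with
  | zero =>
    obtain ⟨ω, hω, h⟩ := cs.exists_isReduced w
    exact ⟨ω, h.symm, by rw [h, hω.eq, zero_add]⟩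
  | succ k ih =>
    obtain ⟨ω, h, hl⟩ := ih hij.symm hj hi (by rw [M.symmetric]; lia)
    rw [← h] at hi
    obtain ⟨n, hn, h1⟩ := cs.exists_getD_leftInvSeq_eq_of_isLeftDescent hi
    rcases Nat.lt_or_ge n k with hnk | hnk
    · rw [getD_leftInvSeq_alternatingFrom_append _ _ _ hnk] at h1
      refine absurd ?_ (cs.simple_mul_simple_pow_ne_one hij.symm n.succ_pos
        (by rw [M.symmetric]; lia))
      rw [pow_succ, ← mul_assoc, h1, simple_mul_simple_self]
    · have h2 := cs.getD_leftInvSeq_mul_wordProd (alternatingFrom j i k ++ ω) n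
      rw [h1, h, List.eraseIdx_append_of_length_le (by simpa using hnk)] at h2
      simp only [length_alternatingFrom, List.length_append] at h2 hn
      refine ⟨ω.eraseIdx (n - k), ?_, ?_⟩
      · rw [alternatingFrom, List.cons_append, wordProd_cons, ← h2, simple_mul_simple_cancel_left]
      · rw [List.length_eraseIdx_of_lt (by lia)]
        lia

end CoxeterSystem

section CommutationClasses

variable {B : Type*} {M : CoxeterMatrix B}

theorem CommStep.symm {l l' : List B} (h : CommStep M l l') : CommStep M l' l := by
  obtain ⟨u, v, a, b, hab, rfl, rfl⟩ := h
  exact ⟨u, v, b, a, by rw [M.symmetric, hab], rfl, rfl⟩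

namespace CommEquiv

theorem refl (l : List B) : CommEquiv M l l := Relation.ReflTransGen.refl

theorem trans {l₁ l₂ l₃ : List B} (h : CommEquiv M l₁ l₂) (h' : CommEquiv M l₂ l₃) :
    CommEquiv M l₁ l₃ := Relation.ReflTransGen.trans h h'

theorem symm {l l' : List B} (h : CommEquiv M l l') : CommEquiv M l' l := by
  induction h with
  | refl => exact refl _
  | tail _ h ih => exact Relation.ReflTransGen.head h.symm ih

theorem of_step {l l' : List B} (h : CommStep M l l') : CommEquiv M l l' :=
  Relation.ReflTransGen.single (Or.inl h)

/-- A relation that is reflexive, transitive and contains the commutation steps contains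
`CommEquiv`. -/
theorem rel_of_step {r : List B → List B → Prop} (refl : ∀ l, r l l)
    (trans : ∀ l₁ l₂ l₃, r l₁ l₂ → r l₂ l₃ → r l₁ l₃)
    (step : ∀ l l', CommStep M l l' → r l l') {l l' : List B} (h : CommEquiv M l l') :
    r l l' := by
  induction h with
  | refl => exact refl _
  | tail _ h ih => exact trans _ _ _ ih (step _ _ (h.elim id CommStep.symm))

theorem append_left (w : List B) {l l' : List B} (h : CommEquiv M l l') :
    CommEquiv M (w ++ l) (w ++ l') := by
  refine rel_of_step (r := fun l l' => CommEquiv M (w ++ l) (w ++ l')) (fun _ => refl _)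
    (fun _ _ _ => trans) ?_ h
  rintro _ _ ⟨u, v, a, b, hab, rfl, rfl⟩
  exact of_step ⟨w ++ u, v, a, b, hab, by simp, by simp⟩

theorem append_right (w : List B) {l l' : List B} (h : CommEquiv M l l') :
    CommEquiv M (l ++ w) (l' ++ w) := by
  refine rel_of_step (r := fun l l' => CommEquiv M (l ++ w) (l' ++ w)) (fun _ => refl _)
    (fun _ _ _ => trans) ?_ h
  rintro _ _ ⟨u, v, a, b, hab, rfl, rfl⟩
  exact of_step ⟨u, v ++ w, a, b, hab, by simp, by simp⟩

theorem cons (a : B) {l l' : List B} (h : CommEquiv M l l') :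
    CommEquiv M (a :: l) (a :: l') :=
  append_left [a] h

theorem length_eq {l l' : List B} (h : CommEquiv M l l') : l.length = l'.length := by
  refine rel_of_step (r := fun l l' => l.length = l'.length) (fun _ => rfl)
    (fun _ _ _ => Eq.trans) ?_ h
  rintro _ _ ⟨u, v, a, b, hab, rfl, rfl⟩
  simp

theorem wordProd_eq {W : Type*} [Group W] (cs : CoxeterSystem M W) {l l' : List B}
    (h : CommEquiv M l l') : cs.wordProd l = cs.wordProd l' := by
  refine rel_of_step (r := fun l l' => cs.wordProd l = cs.wordProd l') (fun _ => rfl)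
    (fun _ _ _ => Eq.trans) ?_ h
  rintro _ _ ⟨u, v, a, b, hab, rfl, rfl⟩
  have h := cs.wordProd_braidWord_eq a b
  simp only [CoxeterSystem.braidWord, M.symmetric b a, hab, CoxeterSystem.alternatingWord] at h
  simp [CoxeterSystem.wordProd_cons] at h
  simp only [CoxeterSystem.wordProd_append, CoxeterSystem.wordProd_cons]
  rw [← mul_assoc (cs.simple a), h, mul_assoc]

theorem isReduced_iff {W : Type*} [Group W] (cs : CoxeterSystem M W) {l l' : List B}
    (h : CommEquiv M l l') : cs.IsReduced l ↔ cs.IsReduced l' := by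
  rw [CoxeterSystem.IsReduced, CoxeterSystem.IsReduced, h.wordProd_eq cs, h.length_eq]

open scoped Classical in
/-- The subword in two noncommuting letters is an invariant of the commutation class. -/
theorem filter_eq {a b : B} (hab : M a b ≠ 2) {l l' : List B} (h : CommEquiv M l l') :
    l.filter (fun x => x = a ∨ x = b) = l'.filter (fun x => x = a ∨ x = b) := by
  refine rel_of_step
    (r := fun l l' => l.filter (fun x => x = a ∨ x = b) = l'.filter (fun x => x = a ∨ x = b))
    (fun _ => rfl) (fun _ _ _ => Eq.trans) ?_ h
  rintro _ _ ⟨u, v, x, y, hxy, rfl, rfl⟩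
  by_cases hx : x = a ∨ x = b <;> by_cases hy : y = a ∨ y = b <;>
    simp [hx, hy]
  have hba := M.symmetric a b
  grind

theorem cons_append_comm {b : B} {l : List B} (h : ∀ x ∈ l, M b x = 2) (l' : List B) :
    CommEquiv M (b :: (l ++ l')) (l ++ b :: l') := by
  induction l with
  | nil => exact refl _
  | cons a l ih =>
    refine (of_step ⟨[], l ++ l', b, a, h a (by simp), rfl, rfl⟩).trans ?_
    exact (ih fun x hx => h x (by simp [hx])).cons a

theorem map_partition {ι : Type*} (f : ι → B) (p : ι → Prop) [DecidablePred p] {l : List ι}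
    (h : l.Pairwise fun x y => ¬ p x → p y → M (f x) (f y) = 2) :
    CommEquiv M (l.map f)
      ((l.filter fun x => p x).map f ++ (l.filter fun x => ¬ p x).map f) := by
  induction l with
  | nil => exact refl _
  | cons x l ih =>
    rw [List.pairwise_cons] at h
    by_cases hx : p x
    · simpa [hx] using (ih h.2).cons (f x)
    · refine ((ih h.2).cons (f x)).trans ?_
      simpa [hx] using cons_append_comm (b := f x) (l := (l.filter fun x => p x).map f)
        (by simpa using fun _ y hy hp hxy => hxy ▸ h.1 y hy hx hp) _

end CommEquiv

end CommutationClasses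

section Heaps

variable {B : Type*} {M : CoxeterMatrix B}

theorem heapLe.le {ω : List B} {i j : Fin ω.length} (h : heapLe M ω i j) : i ≤ j := by
  induction h with
  | refl => exact le_rfl
  | tail _ h ih => exact ih.trans (Fin.le_def.mpr h.1.le)

theorem heapLt.lt {ω : List B} {i j : Fin ω.length} (h : heapLt M ω i j) : i < j :=
  lt_of_le_of_ne h.1.le h.2

/-- `c` is a convex chain in the heap of `ω` with labels alternating between `a` and `b`. -/
def IsConvexChain (M : CoxeterMatrix B) (ω : List B) (a b : B) {m : ℕ}
    (c : Fin m → Fin ω.length) : Prop :=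
  (∀ p q, p < q → heapLt M ω (c p) (c q)) ∧
    (∀ p : Fin m, ω.get (c p) = if (p : ℕ) % 2 = 0 then a else b) ∧
    (∀ (p q : Fin m) (k : Fin ω.length),
      heapLe M ω (c p) k → heapLe M ω k (c q) → ∃ r, c r = k)

theorem isConvexChain_pair_iff {ω : List B} {i j : Fin ω.length} (a : B) :
    IsConvexChain M ω a a ![i, j] ↔ HeapCovers M ω i j ∧ ω.get i = a ∧ ω.get j = a := by
  constructor
  · rintro ⟨h1, h2, h3⟩
    refine ⟨⟨h1 0 1 (by simp), fun k hik hkj => ?_⟩, by simpa using h2 0, by simpa using h2 1⟩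
    obtain ⟨r, hr⟩ := h3 0 1 k hik.1 hkj.1
    fin_cases r
    · exact hik.2 hr
    · exact hkj.2 hr.symm
  · rintro ⟨⟨h1, h2⟩, h3, h4⟩
    refine ⟨?_, ?_, ?_⟩
    · simpa [Fin.forall_fin_two] using h1
    · simpa [Fin.forall_fin_two] using ⟨h3, h4⟩
    · have key (k) (hik : heapLe M ω i k) (hkj : heapLe M ω k j) : i = k ∨ j = k := by
        by_contra! hne
        exact h2 k ⟨hik, hne.1⟩ ⟨hkj, hne.2.symm⟩
      have hij := h1.lt
      intro p q k hpk hkq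
      have h5 := hpk.le
      have h6 := hkq.le
      rw [Fin.exists_fin_two]
      fin_cases p <;> fin_cases q <;> simp at hpk hkq h5 h6 ⊢
      · exact Or.inl (le_antisymm h5 h6)
      · exact key k hpk hkq
      · exact absurd (h5.trans h6) hij.not_ge
      · exact Or.inr (le_antisymm h5 h6)

/-- A label-preserving bijection between the positions of two words that preserves and reflects
the generating relation of the heap. -/
def IsHeapIso (M : CoxeterMatrix B) (ω ω' : List B) (e : Fin ω.length ≃ Fin ω'.length) : Prop :=
  (∀ i, ω'.get (e i) = ω.get i) ∧
    ∀ i j, ((e i : ℕ) < e j ∧ M (ω'.get (e i)) (ω'.get (e j)) ≠ 2) ↔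
      ((i : ℕ) < j ∧ M (ω.get i) (ω.get j) ≠ 2)

namespace IsHeapIso

theorem symm {ω ω' : List B} {e : Fin ω.length ≃ Fin ω'.length} (h : IsHeapIso M ω ω' e) :
    IsHeapIso M ω' ω e.symm := by
  refine ⟨fun i => ?_, fun i j => ?_⟩
  · rw [← h.1, e.apply_symm_apply]
  · rw [← h.2, e.apply_symm_apply, e.apply_symm_apply]

theorem heapLe_of_heapLe {ω ω' : List B} {e : Fin ω.length ≃ Fin ω'.length}
    (h : IsHeapIso M ω ω' e) {i j : Fin ω.length} (hij : heapLe M ω i j) :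
    heapLe M ω' (e i) (e j) :=
  Relation.ReflTransGen.lift e (fun _ _ => (h.2 _ _).mpr) _ _ hij

theorem isConvexChain {ω ω' : List B} {e : Fin ω.length ≃ Fin ω'.length}
    (h : IsHeapIso M ω ω' e) {a b : B} {m : ℕ} {c : Fin m → Fin ω.length}
    (hc : IsConvexChain M ω a b c) : IsConvexChain M ω' a b (e ∘ c) := by
  obtain ⟨h1, h2, h3⟩ := hc
  refine ⟨fun p q hpq => ⟨h.heapLe_of_heapLe (h1 p q hpq).1, e.injective.ne (h1 p q hpq).2⟩,
    fun p => (h.1 _).trans (h2 p), fun p q k hpk hkq => ?_⟩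
  obtain ⟨r, hr⟩ := h3 p q (e.symm k) (by simpa using h.symm.heapLe_of_heapLe hpk)
    (by simpa using h.symm.heapLe_of_heapLe hkq)
  exact ⟨r, by simp [hr]⟩

end IsHeapIso

theorem CommStep.exists_isHeapIso {ω ω' : List B} (h : CommStep M ω ω') :
    ∃ e, IsHeapIso M ω ω' e := by
  obtain ⟨u, v, a, b, hab, rfl, rfl⟩ := h
  have hba : M b a = 2 := by rw [M.symmetric, hab]
  have hl : (u ++ a :: b :: v).length = (u ++ b :: a :: v).length := by simp
  let σ (k : ℕ) : ℕ :=
    if k = u.length then u.length + 1 else if k = u.length + 1 then u.length else k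
  have hσ (k : ℕ) : σ (σ k) = k := by grind
  have hσl (k : ℕ) (hk : k < (u ++ a :: b :: v).length) : σ k < (u ++ a :: b :: v).length := by
    simp only [List.length_append, List.length_cons] at hk ⊢
    grind
  let e : Fin (u ++ a :: b :: v).length ≃ Fin (u ++ b :: a :: v).length :=
    { toFun i := ⟨σ i, (hσl i i.2).trans_eq hl⟩
      invFun i := ⟨σ i, hσl i (i.2.trans_eq hl.symm)⟩
      left_inv i := Fin.ext (hσ i)
      right_inv i := Fin.ext (hσ i) }
  have he (i) : (u ++ b :: a :: v).get (e i) = (u ++ a :: b :: v).get i := by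
    obtain ⟨i, hi⟩ := i
    simp only [List.get_eq_getElem, e, Equiv.coe_fn_mk]
    grind
  refine ⟨e, he, fun i j => ?_⟩
  rw [he, he]
  refine and_congr_left fun hij => ?_
  obtain ⟨i, hi⟩ := i
  obtain ⟨j, hj⟩ := j
  simp only [List.get_eq_getElem, e, Equiv.coe_fn_mk] at hij ⊢
  have h1 : ¬ (i = u.length ∧ j = u.length + 1) := by
    rintro ⟨rfl, rfl⟩
    simp [hab] at hij
  have h2 : ¬ (j = u.length ∧ i = u.length + 1) := by
    rintro ⟨rfl, rfl⟩
    simp [hba] at hij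
  grind

theorem IsConvexChain.of_commEquiv {ω ω' : List B} (h : CommEquiv M ω ω') {a b : B} {m : ℕ}
    {c : Fin m → Fin ω.length} (hc : IsConvexChain M ω a b c) :
    ∃ c' : Fin m → Fin ω'.length, IsConvexChain M ω' a b c' := by
  refine CommEquiv.rel_of_step (r := fun ω ω' => (∃ c : Fin m → Fin ω.length,
    IsConvexChain M ω a b c) → ∃ c' : Fin m → Fin ω'.length, IsConvexChain M ω' a b c')
    (fun _ => id) (fun _ _ _ h h' => h' ∘ h) ?_ h ⟨c, hc⟩
  rintro ω ω' h ⟨c, hc⟩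
  obtain ⟨e, he⟩ := h.exists_isHeapIso
  exact ⟨_, he.isConvexChain hc⟩

theorem getElem_alternatingFrom (a b : B) (m k : ℕ)
    (hk : k < (CoxeterSystem.alternatingFrom a b m).length) :
    (CoxeterSystem.alternatingFrom a b m)[k] = if k % 2 = 0 then a else b := by
  induction m generalizing a b k with
  | zero => simp [CoxeterSystem.alternatingFrom] at hk
  | succ m ih =>
    cases k with
    | zero => simp [CoxeterSystem.alternatingFrom]
    | succ k =>
      simp only [CoxeterSystem.alternatingFrom, List.getElem_cons_succ]
      rw [ih]
      grind

theorem exists_isConvexChain_append {a b : B} (hab : M a b ≠ 2) (m : ℕ) (u v : List B) :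
    ∃ c : Fin m → Fin (u ++ CoxeterSystem.alternatingFrom a b m ++ v).length,
      IsConvexChain M (u ++ CoxeterSystem.alternatingFrom a b m ++ v) a b c := by
  have hlen : (u ++ CoxeterSystem.alternatingFrom a b m ++ v).length =
      u.length + m + v.length := by simp [Nat.add_assoc]
  let c (p : Fin m) : Fin (u ++ CoxeterSystem.alternatingFrom a b m ++ v).length :=
    ⟨u.length + p, by lia⟩
  have hget (p : Fin m) : (u ++ CoxeterSystem.alternatingFrom a b m ++ v).get (c p) =
      if (p : ℕ) % 2 = 0 then a else b := by
    simp only [c, List.get_eq_getElem]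
    rw [List.getElem_append_left (by simp), List.getElem_append_right (by simp),
      getElem_alternatingFrom]
    simp
  have hle (k : ℕ) (p q : Fin m) (hpq : (p : ℕ) + k = q) :
      heapLe M (u ++ CoxeterSystem.alternatingFrom a b m ++ v) (c p) (c q) := by
    induction k generalizing q with
    | zero =>
      obtain rfl : p = q := Fin.ext hpq
      exact Relation.ReflTransGen.refl
    | succ k ih =>
      refine (ih ⟨p + k, by lia⟩ rfl).tail ⟨?_, ?_⟩
      · simp only [c]
        lia
      · rw [hget, hget]
        have hba := M.symmetric b a
        grind
  refine ⟨c, fun p q hpq => ⟨hle (q - p) p q (by lia), ?_⟩, hget, fun p q k hpk hkq => ?_⟩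
  · simp only [c, ne_eq, Fin.mk.injEq]
    lia
  · have h1 := Fin.le_def.mp hpk.le
    have h2 := Fin.le_def.mp hkq.le
    simp only [c] at h1 h2
    exact ⟨⟨k - u.length, by lia⟩, Fin.ext (by simp only [c]; lia)⟩

/-- A convex subset of the heap of `ω` occurs as a factor of some word that is commutation
equivalent to `ω`. -/
theorem exists_commEquiv_of_convex {ω : List B} (C : Fin ω.length → Prop) [DecidablePred C]
    (hC : ∀ i j k, C i → C j → heapLe M ω i k → heapLe M ω k j → C k) :
    ∃ u v, CommEquiv M ω (u ++ ((List.finRange ω.length).filter fun i => C i).map ω.get ++ v) := by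
  classical
  let D (i : Fin ω.length) : Prop := ∃ j, C j ∧ heapLe M ω i j
  have h1 := CommEquiv.map_partition (M := M) ω.get D (l := List.finRange ω.length) <| by
    refine (List.pairwise_lt_finRange _).imp fun {x y} hxy hx hy => ?_
    by_contra hM
    obtain ⟨j, hj, hyj⟩ := hy
    exact hx ⟨j, hj, Relation.ReflTransGen.head ⟨hxy, hM⟩ hyj⟩
  have h2 := CommEquiv.map_partition (M := M) ω.get (fun i => ¬ C i)
    (l := (List.finRange ω.length).filter fun i => D i) <| by
    refine ((List.pairwise_lt_finRange _).filter _).imp_of_mem fun {x y} _ hyD hxy hx hy => ?_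
    by_contra hM
    obtain ⟨j, hj, hyj⟩ := of_decide_eq_true (List.mem_filter.mp hyD).2
    exact hy (hC x j y (not_not.mp hx) hj (Relation.ReflTransGen.single ⟨hxy, hM⟩) hyj)
  have h3 : ((List.finRange ω.length).filter fun i => D i).filter (fun i => ¬ ¬ C i) =
      (List.finRange ω.length).filter fun i => C i := by
    rw [List.filter_filter]
    refine List.filter_congr fun i _ => ?_
    have : C i → D i := fun hi => ⟨i, hi, Relation.ReflTransGen.refl⟩
    simpa using this
  rw [h3] at h2
  have h4 := h1.trans (h2.append_right _)
  rw [show (List.finRange ω.length).map ω.get = ω by simp] at h4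
  exact ⟨_, _, h4⟩

theorem exists_isConvexChain_iff {ω : List B} {a b : B} (hab : M a b ≠ 2) (m : ℕ) :
    (∃ c : Fin m → Fin ω.length, IsConvexChain M ω a b c) ↔
      ∃ u v, CommEquiv M ω (u ++ CoxeterSystem.alternatingFrom a b m ++ v) := by
  classical
  constructor
  · rintro ⟨c, h1, h2, h3⟩
    obtain ⟨u, v, h⟩ := exists_commEquiv_of_convex (M := M) (fun i => i ∈ Set.range c) <| by
      rintro _ _ k ⟨p, rfl⟩ ⟨q, rfl⟩ hpk hkq
      exact h3 p q k hpk hkq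
    have hc : StrictMono c := fun p q hpq => (h1 p q hpq).lt
    have hl : (List.finRange ω.length).filter (fun i => i ∈ Set.range c) = List.ofFn c := by
      refine List.Pairwise.eq_of_mem_iff (r := (· < ·))
        ((List.pairwise_lt_finRange _).filter _) ?_ ?_
      · rw [List.pairwise_ofFn]
        exact fun i j hij => hc hij
      · simp [List.mem_ofFn]
    refine ⟨u, v, ?_⟩
    convert h
    rw [hl]
    refine List.ext_getElem (by simp) fun k hk hk' => ?_
    rw [getElem_alternatingFrom]
    simpa using (h2 ⟨k, by simpa using hk⟩).symm
  · rintro ⟨u, v, h⟩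
    obtain ⟨c, hc⟩ := exists_isConvexChain_append hab m u v
    exact hc.of_commEquiv h.symm

end Heaps

section FullCommutativity

variable {B W : Type*} [Group W] {M : CoxeterMatrix B} (cs : CoxeterSystem M W)

/-- No word in the commutation class of `ω` contains a factor `a a` or a factor `a b a ⋯` of length
`M a b ≥ 3`. -/
def IsBraidAvoiding (M : CoxeterMatrix B) (ω : List B) : Prop :=
  (∀ u v a, ¬ CommEquiv M ω (u ++ a :: a :: v)) ∧
    ∀ u v a b, 3 ≤ M a b → ¬ CommEquiv M ω (u ++ CoxeterSystem.alternatingFrom a b (M a b) ++ v)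

namespace IsBraidAvoiding

theorem of_commEquiv {ω ω' : List B} (hω : IsBraidAvoiding M ω) (h : CommEquiv M ω ω') :
    IsBraidAvoiding M ω' :=
  ⟨fun u v a h' => hω.1 u v a (h.trans h'), fun u v a b hab h' => hω.2 u v a b hab (h.trans h')⟩

theorem of_cons {ω : List B} {a : B} (hω : IsBraidAvoiding M (a :: ω)) : IsBraidAvoiding M ω :=
  ⟨fun u v b h => hω.1 (a :: u) v b (h.cons a),
    fun u v b c hbc h => hω.2 (a :: u) v b c hbc (h.cons a)⟩

theorem commEquiv {ω ω' : List B} (h : IsBraidAvoiding M ω) (hω : cs.IsReduced ω)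
    (hω' : cs.IsReduced ω') (hw : cs.wordProd ω' = cs.wordProd ω) : CommEquiv M ω ω' := by
  induction hn : ω.length generalizing ω ω' with
  | zero =>
    have : ω'.length = ω.length := by rw [← hω'.eq, hw, hω.eq]
    rw [List.length_eq_zero_iff.mp hn, List.length_eq_zero_iff.mp (this.trans hn)]
    exact CommEquiv.refl _
  | succ n ih =>
    have hl : ω'.length = ω.length := by rw [← hω'.eq, hw, hω.eq]
    obtain ⟨i, ω, rfl⟩ := List.exists_cons_of_length_eq_add_one hn
    obtain ⟨j, ω', rfl⟩ := List.exists_cons_of_length_eq_add_one (hl.trans hn)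
    have hr : cs.IsReduced ω := hω.drop 1
    have hr' : cs.IsReduced ω' := hω'.drop 1
    simp only [List.length_cons, Nat.add_right_cancel_iff] at hl hn
    have step {k : B} {τ τ' : List B} (h : IsBraidAvoiding M (k :: τ)) (hτ : τ.length = n)
        (hτ' : τ'.length = n) (hk : cs.IsReduced (k :: τ))
        (hw : cs.wordProd (k :: τ') = cs.wordProd (k :: τ)) :
        CommEquiv M (k :: τ) (k :: τ') := by
      have hk' : cs.IsReduced (k :: τ') := by
        rw [CoxeterSystem.IsReduced, hw, hk.eq, List.length_cons, List.length_cons, hτ, hτ']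
      refine (ih h.of_cons (hk.drop 1) (hk'.drop 1) ?_ hτ).cons k
      simpa [CoxeterSystem.wordProd_cons] using hw
    by_cases hij : i = j
    · subst hij
      exact step h hn (hl.trans hn) hω hw
    have hlen : cs.length (cs.wordProd (i :: ω)) = n + 1 := by rw [hω.eq, List.length_cons, hn]
    have descent {k : B} {τ : List B} (hk : cs.IsReduced (k :: τ)) :
        cs.IsLeftDescent (cs.wordProd (k :: τ)) k := by
      have h1 : cs.IsReduced τ := hk.drop 1
      rw [CoxeterSystem.IsLeftDescent, hk.eq, CoxeterSystem.wordProd_cons,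
        CoxeterSystem.simple_mul_simple_cancel_left, h1.eq]
      simp
    have hi := descent hω
    have hj := descent hω'
    rw [hw] at hj
    have hM1 : M i j ≠ 1 := M.off_diagonal i j hij
    have hM0 : M i j ≠ 0 := by
      intro h0
      obtain ⟨v, -, hv⟩ := cs.exists_alternatingFrom_append hij hi hj (n + 2) (Or.inl h0)
      lia
    obtain ⟨v, hv, hvl⟩ := cs.exists_alternatingFrom_append hij hi hj (M i j) (Or.inr le_rfl)
    obtain ⟨m, hm⟩ := Nat.exists_eq_add_one_of_ne_zero hM0
    have h1 : CommEquiv M (i :: ω) (CoxeterSystem.alternatingFrom i j (M i j) ++ v) := by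
      rw [hm] at hv ⊢
      exact step h hn (by simp; lia) hω hv
    rcases Nat.lt_or_ge (M i j) 3 with h3 | h3
    · have h2 : M i j = 2 := by lia
      rw [h2] at h1 hvl
      have h3 : CommEquiv M (i :: ω) (j :: i :: v) :=
        h1.trans (CommEquiv.of_step ⟨[], v, i, j, h2, rfl, rfl⟩)
      refine h3.trans (step (h.of_commEquiv h3) (by simp; lia) (hl.trans hn)
        ((h3.isReduced_iff cs).mp hω) ?_)
      rw [hw, h3.wordProd_eq cs]
    · exact absurd h1 (h.2 [] v i j h3)

theorem isReduced {ω : List B} (h : IsBraidAvoiding M ω) : cs.IsReduced ω := by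
  induction ω with
  | nil => simp [CoxeterSystem.IsReduced]
  | cons i ω ih =>
    have hω := ih h.of_cons
    by_cases hi : cs.IsLeftDescent (cs.wordProd ω) i
    · obtain ⟨ω', hr, hw⟩ := cs.isReduced_cons_of_isLeftDescent hi
      exact absurd ((h.of_cons.commEquiv cs hω hr hw).cons i) (h.1 [] ω' i)
    · rw [CoxeterSystem.IsReduced, CoxeterSystem.wordProd_cons, List.length_cons, ← hω.eq]
      exact cs.not_isLeftDescent_iff.mp hi

end IsBraidAvoiding

theorem isBraidAvoiding_iff {ω : List B} :
    IsBraidAvoiding M ω ↔ cs.IsReduced ω ∧ FullyCommutative cs (cs.wordProd ω) := by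
  classical
  constructor
  · intro h
    have hω := h.isReduced cs
    refine ⟨hω, fun l l' hl hlw hl' hlw' => ?_⟩
    exact (h.commEquiv cs hω hl hlw).symm.trans (h.commEquiv cs hω hl' hlw')
  · rintro ⟨hω, hfc⟩
    constructor
    · intro u v a h
      have h1 := ((h.isReduced_iff cs).mp hω).eq
      have h2 : cs.wordProd (u ++ a :: a :: v) = cs.wordProd (u ++ v) := by
        simp [CoxeterSystem.wordProd_append, CoxeterSystem.wordProd_cons]
      have h3 := cs.length_wordProd_le (u ++ v)
      rw [← h2, h1] at h3
      simp at h3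
    · intro u v a b hab h
      have hp : cs.wordProd (u ++ CoxeterSystem.alternatingFrom b a (M a b) ++ v) =
          cs.wordProd ω := by
        rw [h.wordProd_eq cs]
        simp only [CoxeterSystem.wordProd_append, cs.wordProd_alternatingFrom a b]
      have hr : cs.IsReduced (u ++ CoxeterSystem.alternatingFrom b a (M a b) ++ v) := by
        rw [CoxeterSystem.IsReduced, hp, hω.eq, h.length_eq]
        simp
      have h1 := (h.symm.trans (hfc _ _ hω rfl hr hp)).filter_eq (a := a) (b := b) (by lia)
      have hmem (x y : B) (m : ℕ) (hx : x = a ∨ x = b) (hy : y = a ∨ y = b) :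
          (CoxeterSystem.alternatingFrom x y m).filter (fun x => x = a ∨ x = b) =
            CoxeterSystem.alternatingFrom x y m := by
        rw [List.filter_eq_self]
        intro z hz
        obtain ⟨k, hk, rfl⟩ := List.getElem_of_mem hz
        rw [getElem_alternatingFrom]
        grind
      simp only [List.filter_append, hmem a b _ (.inl rfl) (.inr rfl),
        hmem b a _ (.inr rfl) (.inl rfl), List.append_cancel_right_eq,
        List.append_cancel_left_eq] at h1
      obtain ⟨m, hm⟩ := Nat.exists_eq_add_of_le hab
      rw [hm, Nat.add_comm 3 m] at h1
      simp only [CoxeterSystem.alternatingFrom, List.cons.injEq] at h1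
      obtain ⟨rfl, -⟩ := h1
      simp at hab

end FullCommutativity

/-- Stembridge's criterion: the heap of a word `ω` is the heap of a fully
commutative element (equivalently, `ω` is a reduced word of a fully commutative element)
iff (1) no covering relation joins two positions with the same label, and (2) there is
no convex chain of `m(a,b)` positions with labels alternating `a, b, a, b, …` where
`m(a,b) ≥ 3`. -/
theorem stmt7 {B W : Type*} [Group W] {M : CoxeterMatrix B} (cs : CoxeterSystem M W)
    (ω : List B) :
    (cs.IsReduced ω ∧ FullyCommutative cs (cs.wordProd ω)) ↔
      ((∀ i j, HeapCovers M ω i j → ω.get i ≠ ω.get j) ∧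
        ¬ ∃ (a b : B) (c : Fin (M a b) → Fin ω.length), 3 ≤ M a b ∧
          (∀ p q, p < q → heapLt M ω (c p) (c q)) ∧
          (∀ p : Fin (M a b), ω.get (c p) = if (p : ℕ) % 2 = 0 then a else b) ∧
          (∀ (p q : Fin (M a b)) (k : Fin ω.length),
            heapLe M ω (c p) k → heapLe M ω k (c q) → ∃ r, c r = k)) := by
  rw [← isBraidAvoiding_iff cs, IsBraidAvoiding]
  refine and_congr ⟨fun h i j hij heq => ?_, fun h u v a hc => ?_⟩ ⟨?_, fun h u v a b hab hc => ?_⟩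
  · obtain ⟨u, v, huv⟩ := (exists_isConvexChain_iff (M := M) (a := ω.get i) (b := ω.get i)
      (by simp) 2).mp ⟨_, (isConvexChain_pair_iff _).mpr ⟨hij, rfl, heq.symm⟩⟩
    exact h u v _ (by simpa [alternatingFrom] using huv)
  · obtain ⟨c, hc⟩ := (exists_isConvexChain_iff (M := M) (a := a) (b := a) (by simp) 2).mpr
      ⟨u, v, by simpa [alternatingFrom] using hc⟩
    rw [show c = ![c 0, c 1] by ext i; fin_cases i <;> rfl, isConvexChain_pair_iff] at hc
    exact h _ _ hc.1 (hc.2.1.trans hc.2.2.symm)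
  · rintro h ⟨a, b, c, hab, hc⟩
    obtain ⟨u, v, huv⟩ := (exists_isConvexChain_iff (by lia) _).mp ⟨c, hc⟩
    exact h u v a b hab huv
  · obtain ⟨c, hc⟩ := (exists_isConvexChain_iff (by lia) _).mpr ⟨u, v, hc⟩
    exact h ⟨a, b, c, hab, hc⟩
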